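/- Let ρ : [0,T) × ℝ → (0,∞) be a smooth solution of the renormalized curvature flow PDE ∂_t ρ = ρ² ∂²_θ ρ + ρ²(ρ − 2h_t), 2π-periodic in θ and satisfying the closure conditions for every t. Then the isoperimetric deficit σ_t² − 4πλ_t is non-increasing; moreover (1) d/dt (σ_t² − 4πλ_t) ≤ −(2π/λ_t)(σ_t² − 4πλ_t), and (2) for all t ∈ [0,T), 0 ≤ σ_t² − 4πλ_t ≤ (σ₀² − 4πλ₀) · ( ((−2π + 2σ₀²/λ₀) t + λ₀)/λ₀ )^{ −2π/(−2π + 2σ₀²/λ₀) }. -/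

import Mathlib

open Real Set Filter MeasureTheory Topology NNReal

/-!
Write `u = 1/ρ` for the radius of curvature and `P` for the support function of the curve measured
from its starting point, so that `P'' + P = u` and `2 λ = ∫ P u`. Along the flow
`∂_t u = -(ρ'' + ρ) + 2 h`, and integration by parts gives
`σ' = 4 π h - ∫ ρ` and `λ' = -2 π + 2 h σ`, hence `(σ² - 4 π λ)' = 8 π² - 2 σ ∫ ρ`.

The geometric inputs are the isoperimetric inequality `4 π λ ≤ σ²`, obtained from Wirtinger's
inequality for `P` (`wirtinger_ineq`), and Gage's inequality `π σ / λ ≤ ∫ ρ`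
(`IsClosedCurve.gage`). The latter turns the formula above into the differential inequality (1).

Gage's inequality is proved as follows. The closure conditions allow the area form to be rewritten
as `4 π λ = ∬ k u u` with `k(θ, β) = y sin y`, `y = |θ - β| - π`, and `0 ≤ k ≤ 2` on the square.
Hence `4 π λ > 0`, and the deficit `σ² - 4 π λ = ∬ (1 - k) u u` is at most `(∫ |u|)²`. The positivity
of `u` is not needed for the last bound, and the deficit does not change when a constant is
subtracted from `u` (passage to a parallel curve), so `σ² - 4 π λ ≤ (∫ |u - M|)²` for every `M`
(`IsClosedCurve.deficit_le_sq_integral_abs_sub`). With `d = √(σ² - 4 π λ)`, the roots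
`(σ ± d) / (2 π)` of `λ - σ r + π r²` give two tangent lines to the convex function `x ↦ 1/x`; their
maximum is an affine function plus a positive multiple of `d |x - M|` with `M = 2 λ / σ`.
Integrating `1/u` against this minorant gives exactly `π σ / λ`.

For (2), the deficit decreases and `λ` increases, so `σ² / λ = (σ² - 4 π λ) / λ + 4 π` decreases.
With `c = -2 π + 2 σ₀² / λ₀` this gives `λ' ≤ c`, so `λ_t ≤ c t + λ₀`, and `(c t + λ₀) ^ (2 π / c)` is an
integrating factor for (1).
-/

/-- The perimeter of the strictly convex curve with curvature function `ρ`
in tangent-angle coordinates: `σ = ∫₀^{2π} dθ/ρ(θ)`. -/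
noncomputable def perim (ρ : ℝ → ℝ) : ℝ := ∫ θ in (0:ℝ)..(2 * π), 1 / ρ θ

/-- The curve associated to a curvature function `ρ` in tangent-angle coordinates:
`C(θ) = (∫₀^θ cos β/ρ(β) dβ, ∫₀^θ sin β/ρ(β) dβ)`. -/
noncomputable def curveP (ρ : ℝ → ℝ) (θ : ℝ) : ℝ × ℝ :=
  (∫ β in (0:ℝ)..θ, Real.cos β / ρ β, ∫ β in (0:ℝ)..θ, Real.sin β / ρ β)

/-- The enclosed area `λ = ½ ∫₀^{2π} ⟨C(θ), ν(θ)⟩/ρ(θ) dθ`, with outward normal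
`ν(θ) = (sin θ, −cos θ)`. -/
noncomputable def encArea (ρ : ℝ → ℝ) : ℝ :=
  (1 / 2) * ∫ θ in (0:ℝ)..(2 * π),
    ((curveP ρ θ).1 * Real.sin θ - (curveP ρ θ).2 * Real.cos θ) / ρ θ

/-- The ratio `h = σ/λ`. -/
noncomputable def hRatio (ρ : ℝ → ℝ) : ℝ := perim ρ / encArea ρ

/-- `ρ : [0,T) × ℝ → (0,∞)` is a smooth solution of the renormalized curvature flow PDE
`∂_t ρ = ρ² ∂²_θ ρ + ρ²(ρ − 2 h_t)`, `2π`-periodic in `θ` and satisfying the closure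
conditions for every `t`. -/
def IsRCFSolution (T : ℝ) (ρ : ℝ → ℝ → ℝ) : Prop :=
  ContDiffOn ℝ (⊤ : ℕ∞) (Function.uncurry ρ) (Ico 0 T ×ˢ (univ : Set ℝ)) ∧
  (∀ t ∈ Ico (0:ℝ) T, ∀ θ : ℝ, 0 < ρ t θ) ∧
  (∀ t ∈ Ico (0:ℝ) T, ∀ θ : ℝ, ρ t (θ + 2 * π) = ρ t θ) ∧
  (∀ t ∈ Ico (0:ℝ) T, (∫ θ in (0:ℝ)..(2 * π), Real.cos θ / ρ t θ) = 0) ∧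
  (∀ t ∈ Ico (0:ℝ) T, (∫ θ in (0:ℝ)..(2 * π), Real.sin θ / ρ t θ) = 0) ∧
  (∀ t ∈ Ico (0:ℝ) T, ∀ θ : ℝ,
    HasDerivWithinAt (fun s => ρ s θ)
      ((ρ t θ) ^ 2 * iteratedDeriv 2 (ρ t) θ + (ρ t θ) ^ 2 * (ρ t θ - 2 * hRatio (ρ t)))
      (Ico 0 T) t)


/-! ### Wirtinger's inequality -/

/-- Wirtinger's inequality, in the form `‖f - mean f‖ ≤ ‖f'‖` in `L²(0, 2π)`: by Parseval, since the
`n`-th Fourier coefficient of `f'` is `i n` times that of `f`. -/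
theorem wirtinger_ineq {f g : ℝ → ℝ} (hf : ∀ x, HasDerivAt f (g x) x) (hg : Continuous g)
    (hper : f 0 = f (2 * π)) :
    2 * π * (∫ x in (0:ℝ)..(2 * π), f x ^ 2) - (∫ x in (0:ℝ)..(2 * π), f x) ^ 2 ≤
      2 * π * ∫ x in (0:ℝ)..(2 * π), g x ^ 2 := by
  have h2π : (0:ℝ) < 2 * π := by positivity
  have hfc : Continuous f := continuous_iff_continuousAt.2 fun x => (hf x).continuousAt
  have parseval : ∀ F : ℝ → ℝ, Continuous F →
      HasSum (fun i => ‖fourierCoeffOn h2π (fun x => (F x : ℂ)) i‖ ^ 2)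
        ((2 * π)⁻¹ * ∫ x in (0:ℝ)..(2 * π), F x ^ 2) := by
    intro F hF
    have hc : Continuous fun x => (F x : ℂ) := by fun_prop
    have hm : MemLp (fun x => (F x : ℂ)) 2 (volume.restrict (Ioc 0 (2 * π))) :=
      ((memLp_top_of_bound hc.aestronglyMeasurable
        (sSup ((fun x => ‖(F x : ℂ)‖) '' Icc 0 (2 * π))) (by
          refine (ae_restrict_iff' measurableSet_Ioc).2 (ae_of_all _ fun x hx => ?_)
          exact le_csSup (isCompact_Icc.image hc.norm).bddAbove
            ⟨x, Ioc_subset_Icc_self hx, rfl⟩))).mono_exponent le_top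
    have := hasSum_sq_fourierCoeffOn h2π hm
    simpa using this
  have hF := parseval f hfc
  have hG := parseval g hg
  have h0 : ‖fourierCoeffOn h2π (fun x => (f x : ℂ)) 0‖ ^ 2 =
      ((2 * π)⁻¹ * ∫ x in (0:ℝ)..(2 * π), f x) ^ 2 := by
    rw [fourierCoeffOn_eq_integral]
    simp only [neg_zero, fourier_zero, one_smul, sub_zero]
    rw [intervalIntegral.integral_ofReal]
    rw [← sq_abs ((2 * π)⁻¹ * _), ← Real.norm_eq_abs, ← Complex.norm_real]
    congr 2
    simp
  have hn : ∀ n : ℤ, n ≠ 0 → ‖fourierCoeffOn h2π (fun x => (f x : ℂ)) n‖ ^ 2 ≤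
      ‖fourierCoeffOn h2π (fun x => (g x : ℂ)) n‖ ^ 2 := by
    intro n hn
    have := fourierCoeffOn_of_hasDerivAt h2π (f := fun x => (f x : ℂ))
      (f' := fun x => (g x : ℂ)) hn (fun x _ => (hf x).ofReal_comp)
      (Continuous.intervalIntegrable (by fun_prop) _ _)
    rw [this, hper]
    have hn1 : (1:ℝ) ≤ |(n:ℝ)| := by exact_mod_cast Int.one_le_abs hn
    simp only [sub_self, mul_zero, zero_sub, norm_mul, norm_neg, Complex.ofReal_zero, sub_zero]
    refine pow_le_pow_left₀ (by positivity) ?_ 2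
    have : ‖(1:ℂ) / (-2 * π * Complex.I * n)‖ * ‖((2 * π : ℝ) : ℂ)‖ ≤ 1 := by
      simp [abs_of_pos pi_pos]
      field_simp
      simpa using hn1
    calc _ = (‖(1:ℂ) / (-2 * π * Complex.I * n)‖ * ‖((2 * π : ℝ) : ℂ)‖) *
          ‖fourierCoeffOn h2π (fun x => (g x : ℂ)) n‖ := by ring
      _ ≤ 1 * _ := by gcongr
      _ = _ := one_mul _
  have hF' := hF.update 0 0
  have hle := hasSum_le (fun n => ?_) hF' hG
  · simp only [zero_sub] at hle
    rw [h0] at hle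
    have : (2 * π) ^ 2 * (-((2 * π)⁻¹ * ∫ x in (0:ℝ)..(2 * π), f x) ^ 2 +
        (2 * π)⁻¹ * ∫ x in (0:ℝ)..(2 * π), f x ^ 2) ≤ 
        (2 * π) ^ 2 * ((2 * π)⁻¹ * ∫ x in (0:ℝ)..(2 * π), g x ^ 2) := by gcongr
    field_simp at this
    linarith
  · by_cases h : n = 0
    · subst h; simp
    · simpa [Function.update_of_ne h] using hn n h

/-! ### The support function -/

/-- First coordinate of the curve with radius of curvature `u`. -/
noncomputable def suppX (u : ℝ → ℝ) (θ : ℝ) : ℝ := ∫ β in (0:ℝ)..θ, cos β * u β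
/-- Second coordinate of the curve with radius of curvature `u`. -/
noncomputable def suppY (u : ℝ → ℝ) (θ : ℝ) : ℝ := ∫ β in (0:ℝ)..θ, sin β * u β
/-- Support function `⟨C, ν⟩` of the curve with radius of curvature `u`, measured from the starting
point `C(0) = 0`. -/
noncomputable def suppP (u : ℝ → ℝ) (θ : ℝ) : ℝ := suppX u θ * sin θ - suppY u θ * cos θ
/-- Tangential component of the position vector; it is the derivative of the support function. -/
noncomputable def suppQ (u : ℝ → ℝ) (θ : ℝ) : ℝ := suppX u θ * cos θ + suppY u θ * sin θ

/-- `u` is the radius of curvature of a closed curve. It may change sign, so that the class is stable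
under subtraction of constants. -/
structure IsClosedCurve (u : ℝ → ℝ) : Prop where
  cont : Continuous u
  cosInt : ∫ θ in (0:ℝ)..(2 * π), cos θ * u θ = 0
  sinInt : ∫ θ in (0:ℝ)..(2 * π), sin θ * u θ = 0

theorem hasDerivAt_suppX {u : ℝ → ℝ} (hu : Continuous u) (θ : ℝ) :
    HasDerivAt (suppX u) (cos θ * u θ) θ :=
  (Continuous.integral_hasStrictDerivAt (f := fun β => cos β * u β) (by fun_prop) 0 θ).hasDerivAt

theorem hasDerivAt_suppY {u : ℝ → ℝ} (hu : Continuous u) (θ : ℝ) :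
    HasDerivAt (suppY u) (sin θ * u θ) θ :=
  (Continuous.integral_hasStrictDerivAt (f := fun β => sin β * u β) (by fun_prop) 0 θ).hasDerivAt

theorem hasDerivAt_suppP {u : ℝ → ℝ} (hu : Continuous u) (θ : ℝ) :
    HasDerivAt (suppP u) (suppQ u θ) θ := by
  refine (((hasDerivAt_suppX hu θ).mul (hasDerivAt_sin θ)).sub
    ((hasDerivAt_suppY hu θ).mul (hasDerivAt_cos θ))).congr_deriv ?_
  rw [suppQ]; ring

theorem hasDerivAt_suppQ {u : ℝ → ℝ} (hu : Continuous u) (θ : ℝ) :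
    HasDerivAt (suppQ u) (u θ - suppP u θ) θ := by
  refine (((hasDerivAt_suppX hu θ).mul (hasDerivAt_cos θ)).add
    ((hasDerivAt_suppY hu θ).mul (hasDerivAt_sin θ))).congr_deriv ?_
  rw [suppP]; linear_combination (u θ) * sin_sq_add_cos_sq θ

@[fun_prop]
theorem continuous_suppP {u : ℝ → ℝ} (hu : Continuous u) : Continuous (suppP u) :=
  continuous_iff_continuousAt.2 fun x => (hasDerivAt_suppP hu x).continuousAt

@[fun_prop]
theorem continuous_suppQ {u : ℝ → ℝ} (hu : Continuous u) : Continuous (suppQ u) :=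
  continuous_iff_continuousAt.2 fun x => (hasDerivAt_suppQ hu x).continuousAt

theorem suppP_zero (u : ℝ → ℝ) : suppP u 0 = 0 := by simp [suppP, suppX, suppY]
theorem suppQ_zero (u : ℝ → ℝ) : suppQ u 0 = 0 := by simp [suppQ, suppX, suppY]

namespace IsClosedCurve

variable {u : ℝ → ℝ} (hu : IsClosedCurve u)
include hu

theorem suppP_two_pi : suppP u (2 * π) = 0 := by
  simp [suppP, suppX, suppY, hu.cosInt, hu.sinInt]

theorem suppQ_two_pi : suppQ u (2 * π) = 0 := by
  simp [suppQ, suppX, suppY, hu.cosInt, hu.sinInt]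

theorem integral_suppP :
    ∫ θ in (0:ℝ)..(2 * π), suppP u θ = ∫ θ in (0:ℝ)..(2 * π), u θ := by
  have hc := hu.cont
  have h := intervalIntegral.integral_eq_sub_of_hasDerivAt (a := 0) (b := 2 * π)
    (fun x _ => hasDerivAt_suppQ hc x) (Continuous.intervalIntegrable (by fun_prop) _ _)
  rw [hu.suppQ_two_pi, suppQ_zero, intervalIntegral.integral_sub
    (Continuous.intervalIntegrable (by fun_prop) _ _)
    (Continuous.intervalIntegrable (by fun_prop) _ _)] at h
  linarith

theorem integral_suppP_mul_self :
    ∫ θ in (0:ℝ)..(2 * π), suppP u θ * u θ =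
      (∫ θ in (0:ℝ)..(2 * π), suppP u θ ^ 2) - ∫ θ in (0:ℝ)..(2 * π), suppQ u θ ^ 2 := by
  have hc := hu.cont
  have h := intervalIntegral.integral_eq_sub_of_hasDerivAt (a := 0) (b := 2 * π)
    (fun x _ => (hasDerivAt_suppP hc x).mul (hasDerivAt_suppQ hc x))
    (Continuous.intervalIntegrable (by fun_prop) _ _)
  simp only [Pi.mul_apply, hu.suppQ_two_pi, suppQ_zero, mul_zero, sub_zero] at h
  rw [← intervalIntegral.integral_sub (Continuous.intervalIntegrable (by fun_prop) _ _)
    (Continuous.intervalIntegrable (by fun_prop) _ _), ← sub_eq_zero,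
    ← intervalIntegral.integral_sub (Continuous.intervalIntegrable (by fun_prop) _ _)
    (Continuous.intervalIntegrable (by fun_prop) _ _), ← h]
  congr 1; ext θ; ring

/-- Both sides are the mixed area of `u` and `v`. -/
theorem integral_suppP_mul_comm {v : ℝ → ℝ} (hv : Continuous v) :
    ∫ θ in (0:ℝ)..(2 * π), suppP u θ * v θ = ∫ θ in (0:ℝ)..(2 * π), suppP v θ * u θ := by
  have hc := hu.cont
  have h := intervalIntegral.integral_eq_sub_of_hasDerivAt (a := 0) (b := 2 * π)
    (fun x _ => ((hasDerivAt_suppP hc x).mul (hasDerivAt_suppQ hv x)).sub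
      ((hasDerivAt_suppQ hc x).mul (hasDerivAt_suppP hv x)))
    (Continuous.intervalIntegrable (by fun_prop) _ _)
  simp only [Pi.mul_apply, Pi.sub_apply, hu.suppQ_two_pi, suppQ_zero, hu.suppP_two_pi, suppP_zero,
    mul_zero, sub_zero, zero_mul] at h
  rw [← sub_eq_zero, ← intervalIntegral.integral_sub
    (Continuous.intervalIntegrable (by fun_prop) _ _)
    (Continuous.intervalIntegrable (by fun_prop) _ _), ← h]
  congr 1; ext θ; ring

/-- The isoperimetric inequality `4 π λ ≤ σ²`: since `2 λ = ∫ P² - ∫ P'²` and `σ = ∫ P`, it is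
Wirtinger's inequality for the support function. -/
theorem isoperimetric : 2 * π * (∫ θ in (0:ℝ)..(2 * π), suppP u θ * u θ) ≤
    (∫ θ in (0:ℝ)..(2 * π), u θ) ^ 2 := by
  have hc := hu.cont
  have h := wirtinger_ineq (fun x => hasDerivAt_suppP hc x) (continuous_suppQ hc)
    (by rw [suppP_zero, hu.suppP_two_pi])
  rw [hu.integral_suppP_mul_self, ← hu.integral_suppP]
  linarith

end IsClosedCurve

/-! ### The bounded kernel -/

/-- The kernel `y sin y`, `y = |θ - β| - π`, which represents `4 π` times the area as a quadratic form
in the radius of curvature. -/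
noncomputable def areaKernel (θ β : ℝ) : ℝ := (|θ - β| - π) * sin (|θ - β| - π)

@[fun_prop]
theorem continuous_areaKernel (θ : ℝ) : Continuous (areaKernel θ) := by
  unfold areaKernel; fun_prop

theorem mul_sin_nonneg {y : ℝ} (hy : |y| ≤ π) : 0 ≤ y * sin y := by
  rw [abs_le] at hy
  rcases le_total 0 y with h | h
  · exact mul_nonneg h (sin_nonneg_of_nonneg_of_le_pi h hy.2)
  · exact mul_nonneg_of_nonpos_of_nonpos h (sin_nonpos_of_nonpos_of_neg_pi_le h hy.1)

theorem mul_sin_le_two_of_nonneg {y : ℝ} (h0 : 0 ≤ y) (hy : y ≤ π) : y * sin y ≤ 2 := by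
  have h1 := pi_gt_d4
  have h2 := pi_lt_d4
  rcases le_total y (π / 2) with h | h
  · have := sin_le_one y
    nlinarith
  have hz : sin y = cos (y - π / 2) := by rw [cos_sub_pi_div_two]
  rcases le_total y (π / 2 + 1) with h' | h'
  · have hb := (abs_le.1 (cos_bound (x := y - π / 2) (by rw [abs_le]; constructor <;> linarith))).2
    rw [hz]
    obtain ⟨z, rfl⟩ : ∃ z, y = π / 2 + z := ⟨y - π / 2, by ring⟩
    simp only [add_sub_cancel_left] at *
    have hz0 : 0 ≤ z := by linarith
    have hz1 : z ≤ 1 := by linarith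
    rw [abs_of_nonneg hz0] at hb
    have hc : cos z ≤ 1 - 43 / 96 * z ^ 2 := by
      nlinarith [mul_nonneg (sq_nonneg z) (sub_nonneg.2 (pow_le_one₀ (n := 2) hz0 hz1))]
    have : (1.5708 + z) * (1 - 43 / 96 * z ^ 2) ≤ 2 := by
      nlinarith [mul_nonneg hz0 (sq_nonneg (z - 0.47)), sq_nonneg (z - 0.47)]
    have h3 : 0 ≤ 1 - 43 / 96 * z ^ 2 := by nlinarith
    nlinarith
  · have h3 : sin y ≤ π - y := by
      rw [← sin_pi_sub]; exact sin_le (by linarith)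
    nlinarith

theorem mul_sin_le_two {y : ℝ} (hy : |y| ≤ π) : y * sin y ≤ 2 := by
  rcases le_total 0 y with h | h
  · exact mul_sin_le_two_of_nonneg h (le_of_abs_le hy)
  · have := mul_sin_le_two_of_nonneg (y := -y) (by linarith) (by linarith [neg_le_of_abs_le hy])
    simpa using this

theorem abs_sub_pi_le {θ β : ℝ} (hθ : θ ∈ Icc 0 (2 * π)) (hβ : β ∈ Icc 0 (2 * π)) :
    |(|θ - β| - π)| ≤ π := by
  have : |θ - β| ≤ 2 * π := by rw [abs_le]; constructor <;> linarith [hθ.1, hθ.2, hβ.1, hβ.2]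
  rw [abs_le]; constructor <;> linarith [abs_nonneg (θ - β)]

namespace IsClosedCurve

variable {u : ℝ → ℝ} (hu : IsClosedCurve u)
include hu

/-- `areaKernel` integrates `u` to `2 π` times its support function, up to a combination of `sin` and
`cos`, that is, up to a translation of the curve. -/
theorem integral_areaKernel {θ : ℝ} (hθ : θ ∈ Icc 0 (2 * π)) :
    ∫ β in (0:ℝ)..(2 * π), areaKernel θ β * u β =
      2 * π * suppP u θ + (∫ β in (0:ℝ)..(2 * π), β * cos β * u β) * sin θ
        - (∫ β in (0:ℝ)..(2 * π), β * sin β * u β) * cos θ := by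
  have hc := hu.cont
  have ii : ∀ {f : ℝ → ℝ} (_ : Continuous f) (a b : ℝ), IntervalIntegrable f volume a b :=
    fun hf a b => hf.intervalIntegrable a b
  -- on each side of `β = θ` the kernel is a combination of products of functions of `θ` and `β`
  have expand : ∀ (s a b : ℝ), ∫ β in a..b, (s * π - (θ - β)) * sin (θ - β) * u β =
      (s * π - θ) * (sin θ * (∫ β in a..b, cos β * u β) - cos θ * ∫ β in a..b, sin β * u β) +
      (sin θ * (∫ β in a..b, β * cos β * u β) - cos θ * ∫ β in a..b, β * sin β * u β) := by
    intro s a b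
    simp only [← intervalIntegral.integral_const_mul]
    rw [← intervalIntegral.integral_sub (ii (by fun_prop) _ _) (ii (by fun_prop) _ _),
      ← intervalIntegral.integral_const_mul,
      ← intervalIntegral.integral_sub (ii (by fun_prop) _ _) (ii (by fun_prop) _ _),
      ← intervalIntegral.integral_add (ii (by fun_prop) _ _) (ii (by fun_prop) _ _)]
    congr 1; ext β; rw [sin_sub]; ring
  have h1 : ∫ β in (0:ℝ)..θ, areaKernel θ β * u β =
      ∫ β in (0:ℝ)..θ, (1 * π - (θ - β)) * sin (θ - β) * u β := by
    refine intervalIntegral.integral_congr fun β hβ => ?_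
    rw [uIcc_of_le hθ.1] at hβ
    simp only [areaKernel]
    rw [abs_of_nonneg (by linarith [hβ.2]), sin_sub_pi]; ring
  have h2 : ∫ β in θ..(2 * π), areaKernel θ β * u β =
      ∫ β in θ..(2 * π), ((-1) * π - (θ - β)) * sin (θ - β) * u β := by
    refine intervalIntegral.integral_congr fun β hβ => ?_
    rw [uIcc_of_le hθ.2] at hβ
    simp only [areaKernel]
    rw [abs_of_nonpos (by linarith [hβ.1]), sin_sub_pi, sin_neg]; ring
  have split : ∀ {f : ℝ → ℝ}, Continuous f →
      (∫ β in θ..(2 * π), f β) = (∫ β in (0:ℝ)..(2 * π), f β) - ∫ β in (0:ℝ)..θ, f β := by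
    intro f hf
    rw [intervalIntegral.integral_interval_sub_left (ii hf _ _) (ii hf _ _)]
  rw [← intervalIntegral.integral_add_adjacent_intervals (b := θ)
    (ii (by fun_prop) _ _) (ii (by fun_prop) _ _), h1, h2, expand, expand,
    split (f := fun β => cos β * u β) (by fun_prop), hu.cosInt,
    split (f := fun β => sin β * u β) (by fun_prop), hu.sinInt,
    split (f := fun β => β * cos β * u β) (by fun_prop),
    split (f := fun β => β * sin β * u β) (by fun_prop)]
  simp only [suppP, suppX, suppY]
  ring

/-- A translate `S` of `2 π` times the support function which is given by `areaKernel`. Translations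
do not change the area. -/
theorem exists_support_translate : ∃ S : ℝ → ℝ, Continuous S ∧
    (∀ θ ∈ Icc 0 (2 * π), S θ = ∫ β in (0:ℝ)..(2 * π), areaKernel θ β * u β) ∧
    ∫ θ in (0:ℝ)..(2 * π), S θ * u θ =
      2 * π * ∫ θ in (0:ℝ)..(2 * π), suppP u θ * u θ := by
  have hc := hu.cont
  set a := ∫ β in (0:ℝ)..(2 * π), β * cos β * u β
  set b := ∫ β in (0:ℝ)..(2 * π), β * sin β * u β
  refine ⟨fun θ => 2 * π * suppP u θ + a * sin θ - b * cos θ, by fun_prop,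
    fun θ hθ => (hu.integral_areaKernel hθ).symm, ?_⟩
  have : ∀ θ, (2 * π * suppP u θ + a * sin θ - b * cos θ) * u θ =
      2 * π * (suppP u θ * u θ) + a * (sin θ * u θ) - b * (cos θ * u θ) := fun θ => by ring
  simp only [this]
  rw [intervalIntegral.integral_sub (Continuous.intervalIntegrable (by fun_prop) _ _)
    (Continuous.intervalIntegrable (by fun_prop) _ _),
    intervalIntegral.integral_add (Continuous.intervalIntegrable (by fun_prop) _ _)
    (Continuous.intervalIntegrable (by fun_prop) _ _)]
  simp only [intervalIntegral.integral_const_mul, hu.sinInt, hu.cosInt]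
  ring

theorem area_pos (hpos : ∀ θ, 0 < u θ) : 0 < ∫ θ in (0:ℝ)..(2 * π), suppP u θ * u θ := by
  have hc := hu.cont
  have h2π : (0:ℝ) < 2 * π := by positivity
  obtain ⟨S, hS, hSk, hSi⟩ := hu.exists_support_translate
  have hSpos : ∀ θ ∈ Icc 0 (2 * π), 0 < S θ := by
    intro θ hθ
    rw [hSk θ hθ]
    refine intervalIntegral.integral_pos h2π (Continuous.continuousOn (by fun_prop))
      (fun β hβ => mul_nonneg (mul_sin_nonneg (abs_sub_pi_le hθ (Ioc_subset_Icc_self hβ)))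
        (hpos β).le) ?_
    have hk : ∀ β, |θ - β| = π / 2 → 0 < areaKernel θ β * u β := by
      intro β hβ
      have : areaKernel θ β = π / 2 := by
        rw [areaKernel, hβ, show π / 2 - π = -(π / 2) by ring, sin_neg, sin_pi_div_two]; ring
      rw [this]
      exact mul_pos (by positivity) (hpos β)
    have := Real.pi_pos
    rcases le_total θ π with h | h
    · exact ⟨θ + π / 2, ⟨by linarith [hθ.1], by linarith⟩, hk _ (by
        rw [show θ - (θ + π / 2) = -(π / 2) by ring, abs_neg, abs_of_pos (by positivity)])⟩
    · exact ⟨θ - π / 2, ⟨by linarith, by linarith [hθ.2]⟩, hk _ (by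
        rw [show θ - (θ - π / 2) = π / 2 by ring, abs_of_pos (by positivity)])⟩
  have h : 0 < ∫ θ in (0:ℝ)..(2 * π), S θ * u θ :=
    intervalIntegral.integral_pos h2π (by fun_prop)
      (fun β hβ => (mul_pos (hSpos β (Ioc_subset_Icc_self hβ)) (hpos β)).le)
      ⟨0, ⟨le_rfl, h2π.le⟩, mul_pos (hSpos 0 ⟨le_rfl, h2π.le⟩) (hpos 0)⟩
  rw [hSi] at h
  exact pos_of_mul_pos_right h h2π.le

/-- The deficit is the quadratic form with kernel `1 - areaKernel`, which takes values in `[-1, 1]`. -/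
theorem deficit_le_sq_integral_abs :
    (∫ θ in (0:ℝ)..(2 * π), u θ) ^ 2 - 2 * π * (∫ θ in (0:ℝ)..(2 * π), suppP u θ * u θ) ≤
      (∫ θ in (0:ℝ)..(2 * π), |u θ|) ^ 2 := by
  have hc := hu.cont
  have h2π : (0:ℝ) ≤ 2 * π := by positivity
  obtain ⟨S, hS, hSk, hSi⟩ := hu.exists_support_translate
  set L := ∫ θ in (0:ℝ)..(2 * π), u θ with hL
  set N := ∫ θ in (0:ℝ)..(2 * π), |u θ| with hN
  have hb : ∀ θ ∈ Icc 0 (2 * π), |L - S θ| ≤ N := by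
    intro θ hθ
    rw [hSk θ hθ, hL, ← intervalIntegral.integral_sub
      (Continuous.intervalIntegrable (by fun_prop) _ _)
      (Continuous.intervalIntegrable (by fun_prop) _ _)]
    refine (intervalIntegral.abs_integral_le_integral_abs h2π).trans ?_
    refine intervalIntegral.integral_mono_on h2π
      (Continuous.intervalIntegrable (by fun_prop) _ _)
      (Continuous.intervalIntegrable (by fun_prop) _ _) fun β hβ => ?_
    rw [show u β - areaKernel θ β * u β = (1 - areaKernel θ β) * u β by ring, abs_mul]
    have hy := abs_sub_pi_le hθ hβ
    have h1 : |1 - areaKernel θ β| ≤ 1 := by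
      rw [abs_le]
      constructor <;> simp only [areaKernel] <;> linarith [mul_sin_nonneg hy, mul_sin_le_two hy]
    exact mul_le_of_le_one_left (abs_nonneg _) h1
  have hI : L ^ 2 - 2 * π * (∫ θ in (0:ℝ)..(2 * π), suppP u θ * u θ) =
      ∫ θ in (0:ℝ)..(2 * π), (L - S θ) * u θ := by
    simp only [sub_mul]
    rw [intervalIntegral.integral_sub (Continuous.intervalIntegrable (by fun_prop) _ _)
      (Continuous.intervalIntegrable (by fun_prop) _ _), hSi,
      intervalIntegral.integral_const_mul, ← hL]
    ring
  rw [hI]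
  calc _ ≤ ∫ θ in (0:ℝ)..(2 * π), N * |u θ| := by
        refine intervalIntegral.integral_mono_on h2π
          (Continuous.intervalIntegrable (by fun_prop) _ _)
          (Continuous.intervalIntegrable (by fun_prop) _ _) fun β hβ => ?_
        refine (le_abs_self _).trans ?_
        rw [abs_mul]
        gcongr
        exact hb β hβ
    _ = N ^ 2 := by rw [intervalIntegral.integral_const_mul, sq]

theorem sub_const (M : ℝ) : IsClosedCurve (fun θ => u θ - M) := by
  have hc := hu.cont
  refine ⟨by fun_prop, ?_, ?_⟩ <;> simp only [mul_sub] <;>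
  rw [intervalIntegral.integral_sub (Continuous.intervalIntegrable (by fun_prop) _ _)
      (Continuous.intervalIntegrable (by fun_prop) _ _), intervalIntegral.integral_mul_const] <;>
  simp [hu.cosInt, hu.sinInt]

theorem suppP_sub_const (M θ : ℝ) :
    suppP (fun θ => u θ - M) θ = suppP u θ - M * (1 - cos θ) := by
  have hc := hu.cont
  simp only [suppP, suppX, suppY, mul_sub]
  rw [intervalIntegral.integral_sub (Continuous.intervalIntegrable (by fun_prop) _ _)
      (Continuous.intervalIntegrable (by fun_prop) _ _),
    intervalIntegral.integral_sub (Continuous.intervalIntegrable (by fun_prop) _ _)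
      (Continuous.intervalIntegrable (by fun_prop) _ _),
    intervalIntegral.integral_mul_const, intervalIntegral.integral_mul_const, integral_cos,
    integral_sin]
  simp only [sin_zero, cos_zero]
  linear_combination (-M) * sin_sq_add_cos_sq θ

/-- The deficit is invariant under passage to a parallel curve, `u ↦ u - M`. -/
theorem deficit_le_sq_integral_abs_sub (M : ℝ) :
    (∫ θ in (0:ℝ)..(2 * π), u θ) ^ 2 - 2 * π * (∫ θ in (0:ℝ)..(2 * π), suppP u θ * u θ) ≤
      (∫ θ in (0:ℝ)..(2 * π), |u θ - M|) ^ 2 := by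
  have hc := hu.cont
  refine le_trans (le_of_eq ?_) (hu.sub_const M).deficit_le_sq_integral_abs
  have h1 : ∫ θ in (0:ℝ)..(2 * π), (u θ - M) = (∫ θ in (0:ℝ)..(2 * π), u θ) - 2 * π * M := by
    rw [intervalIntegral.integral_sub (Continuous.intervalIntegrable (by fun_prop) _ _)
      (Continuous.intervalIntegrable (by fun_prop) _ _)]
    simp
  have h2 : ∫ θ in (0:ℝ)..(2 * π), suppP (fun θ => u θ - M) θ * (u θ - M) =
      (∫ θ in (0:ℝ)..(2 * π), suppP u θ * u θ) - 2 * M * (∫ θ in (0:ℝ)..(2 * π), u θ) +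
        2 * π * M ^ 2 := by
    simp only [hu.suppP_sub_const]
    have : ∀ θ, (suppP u θ - M * (1 - cos θ)) * (u θ - M) = suppP u θ * u θ - M * suppP u θ
        - M * u θ + M * (cos θ * u θ) + (M ^ 2 - M ^ 2 * cos θ) := fun θ => by ring
    simp only [this]
    rw [intervalIntegral.integral_add (Continuous.intervalIntegrable (by fun_prop) _ _)
      (Continuous.intervalIntegrable (by fun_prop) _ _), intervalIntegral.integral_add
      (Continuous.intervalIntegrable (by fun_prop) _ _)
      (Continuous.intervalIntegrable (by fun_prop) _ _), intervalIntegral.integral_sub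
      (Continuous.intervalIntegrable (by fun_prop) _ _)
      (Continuous.intervalIntegrable (by fun_prop) _ _), intervalIntegral.integral_sub
      (Continuous.intervalIntegrable (by fun_prop) _ _)
      (Continuous.intervalIntegrable (by fun_prop) _ _), intervalIntegral.integral_sub
      (Continuous.intervalIntegrable (by fun_prop) _ _)
      (Continuous.intervalIntegrable (by fun_prop) _ _)]
    simp only [intervalIntegral.integral_const_mul, hu.cosInt, hu.integral_suppP, integral_cos]
    simp
    ring
  rw [h1, h2]; ring

/-- Gage's inequality `π L / A ≤ ∫ k² ds`. In tangent-angle coordinates the curvature is `k = u⁻¹` and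
`ds = u dθ`, so the right-hand side is `∫ u⁻¹ dθ`. -/
theorem gage {L A : ℝ} (hL : L = ∫ θ in (0:ℝ)..(2 * π), u θ)
    (hA : A = 1 / 2 * ∫ θ in (0:ℝ)..(2 * π), suppP u θ * u θ) (hpos : ∀ θ, 0 < u θ) :
    π * L / A ≤ ∫ θ in (0:ℝ)..(2 * π), (u θ)⁻¹ := by
  have hc := hu.cont
  have hi : Continuous fun θ => (u θ)⁻¹ := hc.inv₀ fun θ => (hpos θ).ne'
  have h2π : (0:ℝ) ≤ 2 * π := by positivity
  have hπ := Real.pi_pos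
  have hA0 : 0 < A := by rw [hA]; have := hu.area_pos hpos; positivity
  have hL0 : 0 < L := by
    rw [hL]; exact intervalIntegral.intervalIntegral_pos_of_pos
      (Continuous.intervalIntegrable hc _ _) hpos (by positivity)
  have hD0 : 0 ≤ L ^ 2 - 4 * π * A := by rw [hA, hL]; linarith [hu.isoperimetric]
  set d := √(L ^ 2 - 4 * π * A) with hd
  have hdd : d ^ 2 = L ^ 2 - 4 * π * A := sq_sqrt hD0
  have hd0 : 0 ≤ d := sqrt_nonneg _
  set M := 2 * A / L with hM
  set N := ∫ θ in (0:ℝ)..(2 * π), |u θ - M| with hN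
  have hdN : d ≤ N := by
    refine (abs_le_of_sq_le_sq' ?_ (intervalIntegral.integral_nonneg h2π
      fun _ _ => abs_nonneg _)).2
    rw [hdd, hA, hL]
    linarith [hu.deficit_le_sq_integral_abs_sub M]
  -- the maximum of the tangent lines to `x ↦ x⁻¹` at `(L + d) / (2 π)` and `(L - d) / (2 π)`
  have hpt : ∀ x, 0 < x → L / A - (L ^ 2 / A ^ 2 - 2 * π / A) / 2 * x +
      d * L / (2 * A ^ 2) * |x - M| ≤ x⁻¹ := by
    intro x hx
    -- the tangent line to `x ↦ x⁻¹` of slope `-c ^ 2`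
    have tangent : ∀ c : ℝ, 2 * c - c ^ 2 * x ≤ x⁻¹ := by
      intro c
      have : x⁻¹ - (2 * c - c ^ 2 * x) = (1 - c * x) ^ 2 / x := by field_simp; ring
      have : 0 ≤ (1 - c * x) ^ 2 / x := by positivity
      linarith
    have key : ∀ e : ℝ, e ^ 2 = d ^ 2 →
        L / A - (L ^ 2 / A ^ 2 - 2 * π / A) / 2 * x - e * L / (2 * A ^ 2) * (x - M) ≤ x⁻¹ := by
      intro e he
      refine le_trans (le_of_eq ?_) (tangent ((L + e) / (2 * A)))
      rw [hdd] at he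
      rw [hM]
      field_simp
      linear_combination x * he
    rcases le_total M x with h | h
    · rw [abs_of_nonneg (by linarith)]
      refine le_trans (le_of_eq ?_) (key (-d) (by ring))
      ring
    · rw [abs_of_nonpos (by linarith)]
      refine le_trans (le_of_eq ?_) (key d rfl)
      ring
  have hint := intervalIntegral.integral_mono_on h2π (μ := volume)
    (f := fun θ => L / A - (L ^ 2 / A ^ 2 - 2 * π / A) / 2 * u θ +
      d * L / (2 * A ^ 2) * |u θ - M|) (g := fun θ => (u θ)⁻¹)
    (Continuous.intervalIntegrable (by fun_prop) _ _)
    (Continuous.intervalIntegrable (by fun_prop) _ _) fun θ _ => hpt _ (hpos θ)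
  refine le_trans ?_ hint
  rw [intervalIntegral.integral_add (Continuous.intervalIntegrable (by fun_prop) _ _)
      (Continuous.intervalIntegrable (by fun_prop) _ _), intervalIntegral.integral_sub
      (Continuous.intervalIntegrable (by fun_prop) _ _)
      (Continuous.intervalIntegrable (by fun_prop) _ _)]
  simp only [intervalIntegral.integral_const_mul, intervalIntegral.integral_const, ← hL, ← hN]
  have h3 : d * L / (2 * A ^ 2) * d ≤ d * L / (2 * A ^ 2) * N := by gcongr
  have h4 : d * L / (2 * A ^ 2) * d = L * (L ^ 2 - 4 * π * A) / (2 * A ^ 2) := by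
    rw [← hdd]; ring
  rw [h4] at h3
  refine le_trans (le_of_eq ?_) (add_le_add_right h3 _)
  simp only [smul_eq_mul]
  field_simp
  ring

end IsClosedCurve

/-! ### Differentiation under the integral sign on a half-open time interval -/

/-- One-sided at `t = 0`: only derivatives within `[0, T)` are assumed, with a bound on the derivative
that is locally uniform in time. The difference quotients are dominated by the mean value inequality. -/
theorem hasDerivWithinAt_integral_Ico {T a b : ℝ} (hab : a ≤ b) {F F' : ℝ → ℝ → ℝ}
    (hF : ∀ t ∈ Ico 0 T, Continuous (F t))
    (hd : ∀ t ∈ Ico 0 T, ∀ θ ∈ Icc a b,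
      HasDerivWithinAt (fun s => F s θ) (F' t θ) (Ico 0 T) t)
    (hb : ∀ t' ∈ Ico 0 T, ∃ C, ∀ t ∈ Icc 0 t', ∀ θ ∈ Icc a b, |F' t θ| ≤ C)
    {t : ℝ} (ht : t ∈ Ico 0 T) :
    HasDerivWithinAt (fun s => ∫ θ in a..b, F s θ) (∫ θ in a..b, F' t θ) (Ico 0 T) t := by
  have ht' : (t + T) / 2 ∈ Ico 0 T := ⟨by linarith [ht.1, ht.2], by linarith [ht.2]⟩
  obtain ⟨C, hC⟩ := hb _ ht'
  rw [hasDerivWithinAt_iff_tendsto_slope]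
  have hev : ∀ᶠ s in 𝓝[Ico 0 T \ {t}] t, s ∈ Icc 0 ((t + T) / 2) := by
    filter_upwards [self_mem_nhdsWithin,
      mem_nhdsWithin_of_mem_nhds (Iio_mem_nhds (show t < (t + T) / 2 by linarith [ht.2]))]
      with s hs hs'
    exact ⟨hs.1.1, le_of_lt hs'⟩
  have hsub : Icc 0 ((t + T) / 2) ⊆ Ico 0 T := fun s hs => ⟨hs.1, hs.2.trans_lt ht'.2⟩
  have hslope : (fun s => ∫ θ in a..b, slope (fun s => F s θ) t s) =ᶠ[𝓝[Ico 0 T \ {t}] t]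
      slope (fun s => ∫ θ in a..b, F s θ) t := by
    filter_upwards [hev] with s hs
    simp only [slope_def_field]
    rw [intervalIntegral.integral_div, intervalIntegral.integral_sub
      ((hF s (hsub hs)).intervalIntegrable _ _) ((hF t ht).intervalIntegrable _ _)]
  refine Tendsto.congr' hslope ?_
  refine intervalIntegral.tendsto_integral_filter_of_dominated_convergence (fun _ => C)
    ?_ ?_ intervalIntegrable_const ?_
  · filter_upwards [hev] with s hs
    simp only [slope_def_field]
    exact (((hF s (hsub hs)).sub (hF t ht)).div_const _).aestronglyMeasurable
  · filter_upwards [hev, self_mem_nhdsWithin] with s hs hs'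
    refine ae_of_all _ fun θ hθ => ?_
    rw [uIoc_of_le hab] at hθ
    have hθ' := Ioc_subset_Icc_self hθ
    have := (convex_Icc 0 ((t + T) / 2)).norm_image_sub_le_of_norm_hasDerivWithin_le
      (f := fun s => F s θ) (f' := fun s => F' s θ) (C := C)
      (fun r hr => (hd r (hsub hr) θ hθ').mono hsub) (fun r hr => hC r hr θ hθ')
      ⟨ht.1, by linarith [ht.2]⟩ hs
    rw [slope_def_field, norm_div]
    exact div_le_of_le_mul₀ (norm_nonneg _) ((abs_nonneg _).trans (hC s hs θ hθ')) this
  · refine ae_of_all _ fun θ hθ => ?_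
    rw [uIoc_of_le hab] at hθ
    exact hasDerivWithinAt_iff_tendsto_slope.1 (hd t ht θ (Ioc_subset_Icc_self hθ))

/-- `u` is a family of radii of curvature on the time interval `[0, T)` with velocity `v`, both bounded
on compact time intervals. No closure condition is imposed. -/
structure IsVariation (T : ℝ) (u v : ℝ → ℝ → ℝ) : Prop where
  cont : ∀ t ∈ Ico 0 T, Continuous (u t)
  cont' : ∀ t ∈ Ico 0 T, Continuous (v t)
  deriv : ∀ t ∈ Ico 0 T, ∀ θ, HasDerivWithinAt (fun s => u s θ) (v t θ) (Ico 0 T) t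
  bound : ∀ t' ∈ Ico 0 T, ∃ C, ∀ t ∈ Icc 0 t', ∀ θ ∈ Icc 0 (2 * π), |u t θ| ≤ C ∧ |v t θ| ≤ C

theorem abs_integral_mul_le {w g : ℝ → ℝ} {C θ : ℝ} (hθ : θ ∈ Icc 0 (2 * π))
    (hw : ∀ β ∈ Icc 0 (2 * π), |w β| ≤ C) (hg : ∀ β, |g β| ≤ 1) :
    |∫ β in (0:ℝ)..θ, g β * w β| ≤ C * (2 * π) := by
  have hC : 0 ≤ C := (abs_nonneg _).trans (hw θ hθ)
  have := intervalIntegral.norm_integral_le_of_norm_le_const (a := 0) (b := θ) (C := C)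
    (f := fun β => g β * w β) (fun β hβ => by
      rw [uIoc_of_le hθ.1] at hβ
      rw [norm_mul]
      exact (mul_le_of_le_one_left (norm_nonneg _) (hg β)).trans
        (hw β ⟨hβ.1.le, hβ.2.trans hθ.2⟩))
  refine this.trans ?_
  rw [sub_zero, abs_of_nonneg hθ.1]
  exact mul_le_mul_of_nonneg_left hθ.2 hC

theorem abs_suppP_le {w : ℝ → ℝ} {C θ : ℝ} (hθ : θ ∈ Icc 0 (2 * π))
    (hw : ∀ β ∈ Icc 0 (2 * π), |w β| ≤ C) : |suppP w θ| ≤ 2 * (C * (2 * π)) := by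
  have hX : |suppX w θ| ≤ C * (2 * π) := abs_integral_mul_le hθ hw abs_cos_le_one
  have hY : |suppY w θ| ≤ C * (2 * π) := abs_integral_mul_le hθ hw abs_sin_le_one
  have h1 : |suppX w θ * sin θ| ≤ C * (2 * π) := by
    rw [abs_mul]; exact (mul_le_of_le_one_right (abs_nonneg _) (abs_sin_le_one θ)).trans hX
  have h2 : |suppY w θ * cos θ| ≤ C * (2 * π) := by
    rw [abs_mul]; exact (mul_le_of_le_one_right (abs_nonneg _) (abs_cos_le_one θ)).trans hY
  rw [suppP]
  linarith [abs_sub (suppX w θ * sin θ) (suppY w θ * cos θ)]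

namespace IsVariation

variable {T : ℝ} {u v : ℝ → ℝ → ℝ} (huv : IsVariation T u v)
include huv

theorem hasDerivWithinAt_integral {t : ℝ} (ht : t ∈ Ico 0 T) :
    HasDerivWithinAt (fun s => ∫ θ in (0:ℝ)..(2 * π), u s θ)
      (∫ θ in (0:ℝ)..(2 * π), v t θ) (Ico 0 T) t :=
  hasDerivWithinAt_integral_Ico (by positivity) huv.cont (fun t ht θ _ => huv.deriv t ht θ)
    (fun t' ht' => (huv.bound t' ht').imp fun _ hC t ht θ hθ => (hC t ht θ hθ).2) ht

theorem hasDerivWithinAt_integral_mul {g : ℝ → ℝ} (hg : Continuous g) (hg1 : ∀ β, |g β| ≤ 1)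
    {t θ : ℝ} (ht : t ∈ Ico 0 T) (hθ : θ ∈ Icc 0 (2 * π)) :
    HasDerivWithinAt (fun s => ∫ β in (0:ℝ)..θ, g β * u s β)
      (∫ β in (0:ℝ)..θ, g β * v t β) (Ico 0 T) t := by
  refine hasDerivWithinAt_integral_Ico hθ.1 (F := fun s β => g β * u s β)
    (F' := fun s β => g β * v s β) (fun t ht => hg.mul (huv.cont t ht))
    (fun t ht θ _ => (huv.deriv t ht θ).const_mul _) (fun t' ht' => ?_) ht
  obtain ⟨C, hC⟩ := huv.bound t' ht'
  refine ⟨C, fun t ht β hβ => ?_⟩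
  rw [abs_mul]
  exact (mul_le_of_le_one_left (abs_nonneg _) (hg1 β)).trans (hC t ht β ⟨hβ.1, hβ.2.trans hθ.2⟩).2

theorem hasDerivWithinAt_suppP {t θ : ℝ} (ht : t ∈ Ico 0 T) (hθ : θ ∈ Icc 0 (2 * π)) :
    HasDerivWithinAt (fun s => suppP (u s) θ) (suppP (v t) θ) (Ico 0 T) t :=
  ((huv.hasDerivWithinAt_integral_mul continuous_cos abs_cos_le_one ht hθ).mul_const _).sub
    ((huv.hasDerivWithinAt_integral_mul continuous_sin abs_sin_le_one ht hθ).mul_const _)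

/-- The first variation `λ' = ∫ P_v u` of the area, by symmetry of the mixed area. -/
theorem hasDerivWithinAt_area {t : ℝ} (ht : t ∈ Ico 0 T) (hu : IsClosedCurve (u t)) :
    HasDerivWithinAt (fun s => 1 / 2 * ∫ θ in (0:ℝ)..(2 * π), suppP (u s) θ * u s θ)
      (∫ θ in (0:ℝ)..(2 * π), suppP (v t) θ * u t θ) (Ico 0 T) t := by
  have hc := huv.cont t ht
  have hc' := huv.cont' t ht
  have h := hasDerivWithinAt_integral_Ico (a := 0) (b := 2 * π) (by positivity)
    (F := fun s θ => suppP (u s) θ * u s θ)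
    (F' := fun s θ => suppP (v s) θ * u s θ + suppP (u s) θ * v s θ)
    (fun t ht => (continuous_suppP (huv.cont t ht)).mul (huv.cont t ht))
    (fun t ht θ hθ => (huv.hasDerivWithinAt_suppP ht hθ).mul (huv.deriv t ht θ))
    (fun t' ht' => by
      obtain ⟨C, hC⟩ := huv.bound t' ht'
      refine ⟨2 * (C * (2 * π)) * C + 2 * (C * (2 * π)) * C, fun t ht θ hθ => ?_⟩
      have hC0 : 0 ≤ C := (abs_nonneg _).trans (hC t ht θ hθ).1
      refine (abs_add_le _ _).trans ?_
      rw [abs_mul, abs_mul]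
      gcongr
      · exact abs_suppP_le hθ fun β hβ => (hC t ht β hβ).2
      · exact (hC t ht θ hθ).1
      · exact abs_suppP_le hθ fun β hβ => (hC t ht β hβ).1
      · exact (hC t ht θ hθ).2) ht
  refine (h.const_mul (1 / 2)).congr_deriv ?_
  rw [intervalIntegral.integral_add (Continuous.intervalIntegrable (by fun_prop) _ _)
    (Continuous.intervalIntegrable (by fun_prop) _ _), hu.integral_suppP_mul_comm hc']
  ring

end IsVariation

/-! ### The speed of the flow -/

section Speed

variable {f : ℝ → ℝ} (hf : ContDiff ℝ (⊤ : ℕ∞) f)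
include hf

theorem hasDerivAt_of_contDiff (x : ℝ) :
    HasDerivAt f (deriv f x) x ∧ HasDerivAt (deriv f) (iteratedDeriv 2 f x) x := by
  have h1 : ContDiff ℝ 2 f := contDiff_infty.1 hf 2
  have h2 : ContDiff ℝ 1 (deriv f) := by
    have : ContDiff ℝ (1 + 1) f := by simpa [one_add_one_eq_two] using h1
    exact (contDiff_succ_iff_deriv.1 this).2.2
  refine ⟨(h1.differentiable (by norm_num) x).hasDerivAt, ?_⟩
  rw [show (2:ℕ) = 1 + 1 from rfl, iteratedDeriv_succ, iteratedDeriv_one]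
  exact (h2.differentiable (by norm_num) x).hasDerivAt

theorem continuous_iteratedDeriv_two : Continuous (iteratedDeriv 2 f) :=
  (contDiff_infty.1 hf 2).continuous_iteratedDeriv 2 le_rfl

/-- The support function of the velocity `-(f'' + f) + 2 h`, explicitly: up to the kernel of
`P ↦ P'' + P` it is `-f + 2 h`. -/
theorem suppP_speed (h θ : ℝ) :
    suppP (fun θ => -(iteratedDeriv 2 f θ + f θ) + 2 * h) θ =
      -f θ + deriv f 0 * sin θ + f 0 * cos θ + 2 * h * (1 - cos θ) := by
  have hc2 := continuous_iteratedDeriv_two hf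
  have hc := hf.continuous
  have hX : suppX (fun θ => -(iteratedDeriv 2 f θ + f θ) + 2 * h) θ =
      -(deriv f θ * cos θ + f θ * sin θ) + deriv f 0 + 2 * h * sin θ := by
    have := intervalIntegral.integral_eq_sub_of_hasDerivAt (a := 0) (b := θ)
      (f := fun x => -(deriv f x * cos x + f x * sin x) + 2 * h * sin x)
      (f' := fun x => cos x * (-(iteratedDeriv 2 f x + f x) + 2 * h))
      (fun x _ => ((((hasDerivAt_of_contDiff hf x).2.mul (hasDerivAt_cos x)).add
        ((hasDerivAt_of_contDiff hf x).1.mul (hasDerivAt_sin x))).neg.add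
        ((hasDerivAt_sin x).const_mul (2 * h))).congr_deriv (by ring))
      (Continuous.intervalIntegrable (by fun_prop) _ _)
    rw [suppX, this]
    simp; ring
  have hY : suppY (fun θ => -(iteratedDeriv 2 f θ + f θ) + 2 * h) θ =
      -(deriv f θ * sin θ - f θ * cos θ) - f 0 + 2 * h * (1 - cos θ) := by
    have := intervalIntegral.integral_eq_sub_of_hasDerivAt (a := 0) (b := θ)
      (f := fun x => -(deriv f x * sin x - f x * cos x) - 2 * h * cos x)
      (f' := fun x => sin x * (-(iteratedDeriv 2 f x + f x) + 2 * h))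
      (fun x _ => ((((hasDerivAt_of_contDiff hf x).2.mul (hasDerivAt_sin x)).sub
        ((hasDerivAt_of_contDiff hf x).1.mul (hasDerivAt_cos x))).neg.sub
        ((hasDerivAt_cos x).const_mul (2 * h))).congr_deriv (by ring))
      (Continuous.intervalIntegrable (by fun_prop) _ _)
    rw [suppY, this]
    simp; ring
  rw [suppP, hX, hY]
  linear_combination (-f θ + 2 * h) * sin_sq_add_cos_sq θ

theorem integral_speed (hper : ∀ θ, f (θ + 2 * π) = f θ) (h : ℝ) :
    ∫ θ in (0:ℝ)..(2 * π), (-(iteratedDeriv 2 f θ + f θ) + 2 * h) =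
      4 * π * h - ∫ θ in (0:ℝ)..(2 * π), f θ := by
  have hc2 := continuous_iteratedDeriv_two hf
  have hc := hf.continuous
  have h0 : deriv f (2 * π) = deriv f 0 := by
    have := deriv_comp_add_const (f := f) (2 * π) 0
    rw [zero_add] at this
    rw [← this]; congr 1; ext θ; exact hper θ
  have h2 : ∫ θ in (0:ℝ)..(2 * π), iteratedDeriv 2 f θ = 0 := by
    rw [intervalIntegral.integral_eq_sub_of_hasDerivAt
      (fun x _ => (hasDerivAt_of_contDiff hf x).2) (hc2.intervalIntegrable _ _), h0, sub_self]
  rw [intervalIntegral.integral_add (Continuous.intervalIntegrable (by fun_prop) _ _)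
    (Continuous.intervalIntegrable (by fun_prop) _ _), intervalIntegral.integral_neg,
    intervalIntegral.integral_add (Continuous.intervalIntegrable (by fun_prop) _ _)
    (Continuous.intervalIntegrable (by fun_prop) _ _), h2]
  simp; ring

theorem integral_suppP_speed (hpos : ∀ θ, 0 < f θ) (hcl : IsClosedCurve fun θ => (f θ)⁻¹)
    (h : ℝ) :
    ∫ θ in (0:ℝ)..(2 * π), suppP (fun θ => -(iteratedDeriv 2 f θ + f θ) + 2 * h) θ * (f θ)⁻¹ =
      -(2 * π) + 2 * h * ∫ θ in (0:ℝ)..(2 * π), (f θ)⁻¹ := by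
  have hi := hcl.cont
  have : ∀ θ, (-f θ + deriv f 0 * sin θ + f 0 * cos θ + 2 * h * (1 - cos θ)) * (f θ)⁻¹ =
      -1 + deriv f 0 * (sin θ * (f θ)⁻¹) + (f 0 - 2 * h) * (cos θ * (f θ)⁻¹) +
        2 * h * (f θ)⁻¹ := by
    intro θ
    have := (hpos θ).ne'
    field_simp; ring
  simp only [suppP_speed hf, this]
  rw [intervalIntegral.integral_add (Continuous.intervalIntegrable (by fun_prop) _ _)
      (Continuous.intervalIntegrable (by fun_prop) _ _), intervalIntegral.integral_add
      (Continuous.intervalIntegrable (by fun_prop) _ _)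
      (Continuous.intervalIntegrable (by fun_prop) _ _), intervalIntegral.integral_add
      (Continuous.intervalIntegrable (by fun_prop) _ _)
      (Continuous.intervalIntegrable (by fun_prop) _ _)]
  simp only [intervalIntegral.integral_const_mul, hcl.sinInt, hcl.cosInt]
  simp

end Speed

/-! ### The differential inequalities -/

theorem antitoneOn_Ico_of_deriv_nonpos {T : ℝ} {f f' : ℝ → ℝ}
    (h : ∀ t ∈ Ico 0 T, HasDerivWithinAt f (f' t) (Ico 0 T) t)
    (h0 : ∀ t ∈ Ico 0 T, f' t ≤ 0) : AntitoneOn f (Ico 0 T) :=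
  antitoneOn_of_hasDerivWithinAt_nonpos (convex_Ico 0 T)
    (fun t ht => (h t ht).continuousWithinAt)
    (fun t ht => (h t (interior_subset ht)).mono interior_subset)
    (fun t ht => h0 t (interior_subset ht))

/-- The consequences for the deficit of the evolution equations of perimeter `σ` and area `A`, with the
isoperimetric inequality and Gage's inequality (for `I = ∫ ρ`) as hypotheses. -/
theorem deficit_of_ode {T : ℝ} {σ A I : ℝ → ℝ}
    (hA : ∀ t ∈ Ico 0 T, 0 < A t) (hσ : ∀ t ∈ Ico 0 T, 0 ≤ σ t)
    (hiso : ∀ t ∈ Ico 0 T, 0 ≤ σ t ^ 2 - 4 * π * A t)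
    (hgage : ∀ t ∈ Ico 0 T, π * σ t / A t ≤ I t)
    (hσ' : ∀ t ∈ Ico 0 T, HasDerivWithinAt σ (4 * π * (σ t / A t) - I t) (Ico 0 T) t)
    (hA' : ∀ t ∈ Ico 0 T, HasDerivWithinAt A (-(2 * π) + 2 * (σ t / A t) * σ t) (Ico 0 T) t) :
    AntitoneOn (fun t => σ t ^ 2 - 4 * π * A t) (Ico 0 T) ∧
    (∀ t ∈ Ico (0:ℝ) T, ∃ d : ℝ,
      HasDerivWithinAt (fun s => σ s ^ 2 - 4 * π * A s) d (Ico 0 T) t ∧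
      d ≤ -(2 * π) / A t * (σ t ^ 2 - 4 * π * A t)) ∧
    (∀ t ∈ Ico (0:ℝ) T,
      σ t ^ 2 - 4 * π * A t ≤ (σ 0 ^ 2 - 4 * π * A 0) *
          Real.rpow (((-(2 * π) + 2 * σ 0 ^ 2 / A 0) * t + A 0) / A 0)
            (-(2 * π) / (-(2 * π) + 2 * σ 0 ^ 2 / A 0))) := by
  have hπ := Real.pi_pos
  have hD' : ∀ t ∈ Ico 0 T, HasDerivWithinAt (fun s => σ s ^ 2 - 4 * π * A s)
      (8 * π ^ 2 - 2 * σ t * I t) (Ico 0 T) t := fun t ht =>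
    (((hσ' t ht).pow 2).sub ((hA' t ht).const_mul (4 * π))).congr_deriv (by
      have := (hA t ht).ne'
      push_cast
      field_simp; ring)
  have hDle : ∀ t ∈ Ico 0 T, 8 * π ^ 2 - 2 * σ t * I t ≤
      -(2 * π) / A t * (σ t ^ 2 - 4 * π * A t) := by
    intro t ht
    have h := mul_le_mul_of_nonneg_left (hgage t ht) (hσ t ht)
    have : -(2 * π) / A t * (σ t ^ 2 - 4 * π * A t) =
        8 * π ^ 2 - 2 * (σ t * (π * σ t / A t)) := by
      have := (hA t ht).ne'
      field_simp; ring
    linarith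
  have hDnp : ∀ t ∈ Ico 0 T, 8 * π ^ 2 - 2 * σ t * I t ≤ 0 := fun t ht =>
    (hDle t ht).trans (mul_nonpos_of_nonpos_of_nonneg
      (div_nonpos_of_nonpos_of_nonneg (by linarith) (hA t ht).le) (hiso t ht))
  have hanti := antitoneOn_Ico_of_deriv_nonpos hD' hDnp
  refine ⟨hanti, fun t ht => ⟨_, hD' t ht, hDle t ht⟩, fun t ht => ?_⟩
  have h0 : (0:ℝ) ∈ Ico 0 T := ⟨le_rfl, ht.1.trans_lt ht.2⟩
  have hA0 := hA 0 h0
  set c := -(2 * π) + 2 * σ 0 ^ 2 / A 0 with hc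
  have ratio : ∀ s ∈ Ico 0 T, σ s ^ 2 / A s = (σ s ^ 2 - 4 * π * A s) / A s + 4 * π := by
    intro s hs
    have := (hA s hs).ne'
    field_simp; ring
  have hcpos : 0 < c := by
    have h1 : 0 ≤ (σ 0 ^ 2 - 4 * π * A 0) / A 0 := div_nonneg (hiso 0 h0) hA0.le
    rw [hc, mul_div_assoc, ratio 0 h0]
    linarith
  -- `A` is increasing
  have hAmono : ∀ s ∈ Ico 0 T, A 0 ≤ A s := by
    intro s hs
    have := antitoneOn_Ico_of_deriv_nonpos (f := fun s => -A s) (fun t ht => (hA' t ht).neg)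
      (fun t ht => by
        have h1 : 0 ≤ (σ t ^ 2 - 4 * π * A t) / A t := div_nonneg (hiso t ht) (hA t ht).le
        have h2 : 2 * (σ t / A t) * σ t = 2 * (σ t ^ 2 / A t) := by ring
        rw [h2, ratio t ht]; linarith) h0 hs hs.1
    simpa using this
  -- hence `σ ^ 2 / A` is decreasing, which bounds the growth of `A`
  have hAle : ∀ s ∈ Ico 0 T, A s ≤ c * s + A 0 := by
    intro s hs
    have := antitoneOn_Ico_of_deriv_nonpos (f := fun s => A s - c * s)
      (fun t ht => (hA' t ht).sub ((hasDerivWithinAt_id t (Ico 0 T)).const_mul c))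
      (fun t ht => by
        have h2 : 2 * (σ t / A t) * σ t = 2 * (σ t ^ 2 / A t) := by ring
        have h3 : (σ t ^ 2 - 4 * π * A t) / A t ≤ (σ 0 ^ 2 - 4 * π * A 0) / A 0 :=
          div_le_div₀ (hiso 0 h0) (hanti h0 ht ht.1) hA0 (hAmono t ht)
        rw [h2, ratio t ht, hc, mul_div_assoc, ratio 0 h0]; linarith) h0 hs hs.1
    simp only [mul_zero, sub_zero] at this
    linarith
  have hw : ∀ s ∈ Ico 0 T, 0 < c * s + A 0 := fun s hs => (hA s hs).trans_le (hAle s hs)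
  set a := 2 * π / c with ha
  have hac : a * c = 2 * π := by rw [ha]; field_simp
  -- `(c t + A 0) ^ a` is an integrating factor
  have hfin := antitoneOn_Ico_of_deriv_nonpos
    (f := fun s => (σ s ^ 2 - 4 * π * A s) * (c * s + A 0) ^ a)
    (fun t ht => (hD' t ht).mul ((((hasDerivWithinAt_id t (Ico 0 T)).const_mul c).add_const
      (A 0)).rpow_const (p := a) (Or.inl (hw t ht).ne')))
    (fun t ht => by
      simp only [mul_one, id]
      have hwt := hw t ht
      have h1 : (c * t + A 0) ^ a = (c * t + A 0) ^ (a - 1) * (c * t + A 0) := by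
        rw [← rpow_add_one hwt.ne']; congr 1; ring
      have h2 : 0 < (c * t + A 0) ^ (a - 1) := rpow_pos_of_pos hwt _
      have h3 : (8 * π ^ 2 - 2 * σ t * I t) * (c * t + A 0) ≤
          -(2 * π) * (σ t ^ 2 - 4 * π * A t) := by
        have h4 := mul_le_mul_of_nonneg_left (hAle t ht) (neg_nonneg.2 (hDnp t ht))
        have h5 := mul_le_mul_of_nonneg_right (hDle t ht) (hA t ht).le
        have h6 : -(2 * π) / A t * (σ t ^ 2 - 4 * π * A t) * A t =
            -(2 * π) * (σ t ^ 2 - 4 * π * A t) := by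
          have := (hA t ht).ne'
          field_simp
        linarith
      rw [h1]
      have : (8 * π ^ 2 - 2 * σ t * I t) * ((c * t + A 0) ^ (a - 1) * (c * t + A 0)) +
          (σ t ^ 2 - 4 * π * A t) * (c * a * (c * t + A 0) ^ (a - 1)) =
          (c * t + A 0) ^ (a - 1) * ((8 * π ^ 2 - 2 * σ t * I t) * (c * t + A 0) +
            2 * π * (σ t ^ 2 - 4 * π * A t)) := by rw [← hac]; ring
      rw [this]
      exact mul_nonpos_of_nonneg_of_nonpos h2.le (by linarith)) h0 ht ht.1
  simp only [mul_zero, zero_add] at hfin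
  have hwt := hw t ht
  have hr : Real.rpow ((c * t + A 0) / A 0) (-(2 * π) / c) =
      A 0 ^ a / (c * t + A 0) ^ a := by
    change ((c * t + A 0) / A 0) ^ (-(2 * π) / c) = _
    rw [neg_div, ← ha, rpow_neg (by positivity), div_rpow hwt.le hA0.le, inv_div]
  rw [hr, ← mul_div_assoc, le_div_iff₀ (rpow_pos_of_pos hwt _)]
  exact hfin

/-! ### The renormalized curvature flow -/

theorem encArea_eq (ρ : ℝ → ℝ) : encArea ρ =
    1 / 2 * ∫ θ in (0:ℝ)..(2 * π), suppP (fun θ => (ρ θ)⁻¹) θ * (ρ θ)⁻¹ := rfl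

theorem perim_eq (ρ : ℝ → ℝ) : perim ρ = ∫ θ in (0:ℝ)..(2 * π), (ρ θ)⁻¹ := by
  simp [perim]

namespace IsRCFSolution

variable {T : ℝ} {ρ : ℝ → ℝ → ℝ} (hρ : IsRCFSolution T ρ)
include hρ

theorem contDiff_slice {t : ℝ} (ht : t ∈ Ico 0 T) : ContDiff ℝ (⊤ : ℕ∞) (ρ t) :=
  hρ.1.comp_contDiff (f := fun θ : ℝ => (t, θ)) (by fun_prop) fun θ => ⟨ht, mem_univ _⟩

theorem isClosedCurve {t : ℝ} (ht : t ∈ Ico 0 T) : IsClosedCurve fun θ => (ρ t θ)⁻¹ :=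
  ⟨(hρ.contDiff_slice ht).continuous.inv₀ fun θ => (hρ.2.1 t ht θ).ne',
    hρ.2.2.2.1 t ht, hρ.2.2.2.2.1 t ht⟩

/-- Under the flow, the radius of curvature `u = 1/ρ` moves with velocity `-(ρ'' + ρ) + 2 h`. -/
theorem isVariation : IsVariation T (fun t θ => (ρ t θ)⁻¹)
    (fun t θ => -(iteratedDeriv 2 (ρ t) θ + ρ t θ) + 2 * hRatio (ρ t)) := by
  obtain ⟨hsm, hpos, hper, -, -, hpde⟩ := id hρ
  have hd : ∀ t ∈ Ico 0 T, ∀ θ, HasDerivWithinAt (fun s => (ρ s θ)⁻¹)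
      (-(iteratedDeriv 2 (ρ t) θ + ρ t θ) + 2 * hRatio (ρ t)) (Ico 0 T) t := fun t ht θ =>
    ((hpde t ht θ).inv (hpos t ht θ).ne').congr_deriv (by
      have := (hpos t ht θ).ne'
      field_simp; ring)
  refine ⟨fun t ht => (hρ.isClosedCurve ht).cont, fun t ht => ?_, hd, fun t' ht' => ?_⟩
  · have h1 := continuous_iteratedDeriv_two (hρ.contDiff_slice ht)
    have h2 := (hρ.contDiff_slice ht).continuous
    fun_prop
  -- `ρ⁻¹` and its time derivative are jointly continuous, hence bounded on compact sets
  set S : Set (ℝ × ℝ) := Ico 0 T ×ˢ univ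
  have hS : UniqueDiffOn ℝ S := (uniqueDiffOn_Ico 0 T).prod uniqueDiffOn_univ
  have hU : ContDiffOn ℝ (⊤ : ℕ∞) (fun p : ℝ × ℝ => (Function.uncurry ρ p)⁻¹) S :=
    hsm.inv fun p hp => (hpos p.1 hp.1 p.2).ne'
  have hU' : ContinuousOn (fun p => fderivWithin ℝ
      (fun p : ℝ × ℝ => (Function.uncurry ρ p)⁻¹) S p (1, 0)) S :=
    (hU.continuousOn_fderivWithin hS (by simp)).clm_apply continuousOn_const
  have hK : IsCompact (Icc 0 t' ×ˢ Icc 0 (2 * π)) := isCompact_Icc.prod isCompact_Icc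
  have hKS : Icc 0 t' ×ˢ Icc 0 (2 * π) ⊆ S := fun p hp =>
    ⟨⟨hp.1.1, hp.1.2.trans_lt ht'.2⟩, mem_univ _⟩
  obtain ⟨C₁, hC₁⟩ := hK.exists_bound_of_continuousOn (hU.continuousOn.mono hKS)
  obtain ⟨C₂, hC₂⟩ := hK.exists_bound_of_continuousOn (hU'.mono hKS)
  refine ⟨max C₁ C₂, fun t ht θ hθ => ⟨(hC₁ (t, θ) ⟨ht, hθ⟩).trans (le_max_left _ _), ?_⟩⟩
  have hpS : (t, θ) ∈ S := hKS ⟨ht, hθ⟩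
  have hcomp := HasFDerivWithinAt.comp_hasDerivWithinAt (s := Ico 0 T) t
    (f := fun s : ℝ => (s, θ)) (f' := ((1 : ℝ), (0 : ℝ)))
    ((hU.differentiableOn (by simp)) (t, θ) hpS).hasFDerivWithinAt
    ((hasDerivWithinAt_id t _).prodMk (hasDerivWithinAt_const t _ θ))
    fun s hs => ⟨hs, mem_univ _⟩
  have heq := (uniqueDiffOn_Ico 0 T t hpS.1).eq_deriv _ (hd t hpS.1 θ) hcomp
  rw [heq]
  exact (hC₂ (t, θ) ⟨ht, hθ⟩).trans (le_max_right _ _)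

end IsRCFSolution

/-- Along the renormalized curvature flow, the isoperimetric deficit
`σ_t² − 4πλ_t` is non-increasing; moreover
(1) `d/dt (σ_t² − 4πλ_t) ≤ −(2π/λ_t)(σ_t² − 4πλ_t)`, and
(2) `0 ≤ σ_t² − 4πλ_t ≤ (σ₀² − 4πλ₀) ⬝ (((−2π + 2σ₀²/λ₀)t + λ₀)/λ₀)^(−2π/(−2π + 2σ₀²/λ₀))`. -/
theorem stmt5 (T : ℝ) (hT : 0 < T) (ρ : ℝ → ℝ → ℝ) (hρ : IsRCFSolution T ρ) :
    AntitoneOn (fun t => (perim (ρ t)) ^ 2 - 4 * π * encArea (ρ t)) (Ico 0 T) ∧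
    (∀ t ∈ Ico (0:ℝ) T, ∃ d : ℝ,
      HasDerivWithinAt (fun s => (perim (ρ s)) ^ 2 - 4 * π * encArea (ρ s)) d
        (Ico 0 T) t ∧
      d ≤ -(2 * π) / encArea (ρ t) * ((perim (ρ t)) ^ 2 - 4 * π * encArea (ρ t))) ∧
    (∀ t ∈ Ico (0:ℝ) T,
      0 ≤ (perim (ρ t)) ^ 2 - 4 * π * encArea (ρ t) ∧
      (perim (ρ t)) ^ 2 - 4 * π * encArea (ρ t) ≤
        ((perim (ρ 0)) ^ 2 - 4 * π * encArea (ρ 0)) *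
          Real.rpow
            (((-(2 * π) + 2 * (perim (ρ 0)) ^ 2 / encArea (ρ 0)) * t + encArea (ρ 0)) /
              encArea (ρ 0))
            (-(2 * π) / (-(2 * π) + 2 * (perim (ρ 0)) ^ 2 / encArea (ρ 0)))) := by
  have hpos := hρ.2.1
  have hcl := fun t (ht : t ∈ Ico 0 T) => hρ.isClosedCurve ht
  have hupos : ∀ t ∈ Ico 0 T, ∀ θ, 0 < (ρ t θ)⁻¹ := fun t ht θ => inv_pos.2 (hpos t ht θ)
  have hiso : ∀ t ∈ Ico 0 T, 0 ≤ perim (ρ t) ^ 2 - 4 * π * encArea (ρ t) := by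
    intro t ht
    have := (hcl t ht).isoperimetric
    rw [perim_eq, encArea_eq]
    linarith
  obtain ⟨h1, h2, h3⟩ := deficit_of_ode (T := T) (σ := fun t => perim (ρ t))
    (A := fun t => encArea (ρ t)) (I := fun t => ∫ θ in (0:ℝ)..(2 * π), ρ t θ)
    (fun t ht => by
      have := (hcl t ht).area_pos (hupos t ht)
      rw [encArea_eq]; positivity)
    (fun t ht => by
      rw [perim_eq]
      exact intervalIntegral.integral_nonneg (by positivity) fun θ _ => (hupos t ht θ).le)
    hiso
    (fun t ht => by
      simpa only [inv_inv] using (hcl t ht).gage (perim_eq _) (encArea_eq _) (hupos t ht))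
    (fun t ht => by
      have := hρ.isVariation.hasDerivWithinAt_integral ht
      rw [integral_speed (hρ.contDiff_slice ht) (hρ.2.2.1 t ht)] at this
      simpa only [perim_eq, hRatio] using this)
    (fun t ht => by
      have := hρ.isVariation.hasDerivWithinAt_area ht (hcl t ht)
      rw [integral_suppP_speed (hρ.contDiff_slice ht) (hpos t ht) (hcl t ht),
        ← perim_eq] at this
      exact this)
  exact ⟨h1, h2, fun t ht => ⟨hiso t ht, h3 t ht⟩⟩
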